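/- There exists a sequence of transitive carefully synchronizing PFAs with three symbols, n states and shortest carefully synchronizing word length Ω(2^{2n/5}/n): there exist a constant c > 0 and an integer N such that for every n ≥ N there is a transitive PFA with n states and an alphabet of 3 symbols which is carefully synchronizing and whose shortest carefully synchronizing word has length at least c·2^{2n/5}/n. -/

import Mathlib

/-- One step of a PFA on an `Option` state. -/
def pfaStep {Q σ : Type*} (δ : Q → σ → Option Q) (o : Option Q) (a : σ) : Option Q :=
  o.bind fun q => δ q a

/-- The (partial) state reached from `q` after reading word `w` in the PFA `δ`. -/
def pfaRun {Q σ : Type*} (δ : Q → σ → Option Q) (q : Q) (w : List σ) : Option Q :=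
  w.foldl (pfaStep δ) (some q)

/-- A word `w` is carefully synchronizing for the PFA `δ`. -/
def IsCareSyncWord {Q σ : Type*} (δ : Q → σ → Option Q) (w : List σ) : Prop :=
  ∃ qs : Q, ∀ q : Q, pfaRun δ q w = some qs

/-- A PFA is transitive if every state can be reached from every state by some word. -/
def PFATransitive {Q σ : Type*} (δ : Q → σ → Option Q) : Prop :=
  ∀ q q' : Q, ∃ w : List σ, pfaRun δ q w = some q'

section Run

variable {Q R σ : Type*} (δ : Q → σ → Option Q)

theorem pfaRun_nil (q : Q) : pfaRun δ q [] = some q := rfl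

theorem foldl_pfaStep_none (w : List σ) : w.foldl (pfaStep δ) none = none := by
  induction w with
  | nil => rfl
  | cons a w ih => exact ih

theorem pfaRun_cons (q : Q) (a : σ) (w : List σ) :
    pfaRun δ q (a :: w) = (δ q a).bind fun q' => pfaRun δ q' w := by
  change w.foldl (pfaStep δ) (δ q a) = _
  cases δ q a with
  | none => exact foldl_pfaStep_none δ w
  | some q' => rfl

theorem pfaRun_append (q : Q) (u v : List σ) :
    pfaRun δ q (u ++ v) = (pfaRun δ q u).bind fun q' => pfaRun δ q' v := by
  induction u generalizing q with
  | nil => rfl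
  | cons a u ih =>
    rw [List.cons_append, pfaRun_cons, pfaRun_cons]
    cases δ q a with
    | none => rfl
    | some q' => exact ih q'

/-- `PFAReach δ q q'` says that some word leads from `q` to `q'`. -/
def PFAReach (q q' : Q) : Prop := ∃ w : List σ, pfaRun δ q w = some q'

variable {δ}

theorem PFAReach.refl (q : Q) : PFAReach δ q q := ⟨[], rfl⟩

theorem PFAReach.trans {p q r : Q} (h : PFAReach δ p q) (h' : PFAReach δ q r) :
    PFAReach δ p r := by
  obtain ⟨u, hu⟩ := h
  obtain ⟨v, hv⟩ := h'
  exact ⟨u ++ v, by rw [pfaRun_append, hu]; exact hv⟩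

theorem PFAReach.single {p q : Q} {a : σ} (h : δ p a = some q) : PFAReach δ p q :=
  ⟨[a], by rw [pfaRun_cons, h]; rfl⟩

/-- `δ` with its states renamed along `e`. -/
def pfaMap (e : Q ≃ R) (δ : Q → σ → Option Q) (r : R) (a : σ) : Option R :=
  (δ (e.symm r) a).map e

theorem pfaRun_pfaMap (e : Q ≃ R) (q : Q) (w : List σ) :
    pfaRun (pfaMap e δ) (e q) w = (pfaRun δ q w).map e := by
  induction w generalizing q with
  | nil => rfl
  | cons a w ih =>
    rw [pfaRun_cons, pfaRun_cons, pfaMap, e.symm_apply_apply]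
    cases δ q a with
    | none => rfl
    | some q' => exact ih q'

theorem isCareSyncWord_pfaMap (e : Q ≃ R) (w : List σ) :
    IsCareSyncWord (pfaMap e δ) w ↔ IsCareSyncWord δ w := by
  constructor
  · rintro ⟨r, hr⟩
    refine ⟨e.symm r, fun q => ?_⟩
    have h := hr (e q)
    rw [pfaRun_pfaMap, Option.map_eq_some_iff] at h
    obtain ⟨q', hq', rfl⟩ := h
    rw [hq', e.symm_apply_apply]
  · rintro ⟨q', hq'⟩
    refine ⟨e q', fun r => ?_⟩
    have h := pfaRun_pfaMap (δ := δ) e (e.symm r) w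
    rwa [e.apply_symm_apply, hq'] at h

theorem PFATransitive.pfaMap (e : Q ≃ R) (h : PFATransitive δ) :
    PFATransitive (pfaMap e δ) := by
  intro r r'
  obtain ⟨w, hw⟩ := h (e.symm r) (e.symm r')
  refine ⟨w, ?_⟩
  have h := pfaRun_pfaMap (δ := δ) e (e.symm r) w
  rwa [e.apply_symm_apply, hw, Option.map_some, e.apply_symm_apply] at h

end Run

namespace BaseFourCounter

/-- The states of a PFA that simulates a base-four counter written on a cyclic tape. Each tape
square holds a digit or the end marker `none`. The square under the head and the carry flag come
with a phase, which selects the action that the next rotation performs. -/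
inductive State (ℓ k : ℕ)
  | ctl (carry : Bool) (j : Fin 6)
  | head (x : Option (Fin 4)) (j : Fin 6)
  | cell (i : Fin (ℓ + 1)) (x : Option (Fin 4))
  | sink (i : Fin (k + 1))

namespace State

variable {ℓ k : ℕ}

/-- The states as a sum of products. -/
def equivSum (ℓ k : ℕ) : State ℓ k ≃
    ((Bool × Fin 6) ⊕ (Option (Fin 4) × Fin 6)) ⊕
      ((Fin (ℓ + 1) × Option (Fin 4)) ⊕ Fin (k + 1)) where
  toFun
    | ctl b j => .inl (.inl (b, j))
    | head x j => .inl (.inr (x, j))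
    | cell i x => .inr (.inl (i, x))
    | sink i => .inr (.inr i)
  invFun
    | .inl (.inl (b, j)) => ctl b j
    | .inl (.inr (x, j)) => head x j
    | .inr (.inl (i, x)) => cell i x
    | .inr (.inr i) => sink i
  left_inv q := by cases q <;> rfl
  right_inv q := by rcases q with (_ | _) | (_ | _) <;> rfl

theorem nonempty_equiv_fin {n : ℕ} (h : n = 5 * ℓ + k + 48) : Nonempty (State ℓ k ≃ Fin n) := by
  refine ⟨(equivSum ℓ k).trans (Fintype.equivFinOfCardEq ?_)⟩
  simp only [Fintype.card_sum, Fintype.card_prod, Fintype.card_bool, Fintype.card_fin,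
    Fintype.card_option]
  omega

/-- Back to the initial configuration. -/
def reset : State ℓ k → State ℓ k
  | ctl _ _ => ctl false 0
  | head _ _ => head none 0
  | cell i _ => cell i (some 0)
  | sink _ => ctl false 0

/-- Advance the phase. -/
def tick : State ℓ k → Option (State ℓ k)
  | ctl b j => if j = 5 then none else some (ctl b (j + 1))
  | head x j => if j = 5 then none else some (head x (j + 1))
  | cell i x => some (cell i x)
  | sink i => some (sink ⟨min (i + 1) k, by omega⟩)

/-- Perform the selected action and rotate the tape by one square. The phases stand for: skip,
absorb the carry, start a new carry at the end marker, propagate the carry, recognize an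
overflow, erase a digit. -/
def turn : State ℓ k → Option (State ℓ k)
  | ctl b j => match j, b with
    | 0, false => some (ctl false 0)
    | 1, true => some (ctl false 0)
    | 2, false => some (ctl true 0)
    | 3, true => some (ctl true 0)
    | 4, true => some (sink 0)
    | _, _ => none
  | head x j => match j, x with
    | 0, x => some (cell (Fin.last ℓ) x)
    | 1, some d => if d = 3 then none else some (cell (Fin.last ℓ) (some (d + 1)))
    | 2, none => some (cell (Fin.last ℓ) none)
    | 3, some d => if d = 3 then some (cell (Fin.last ℓ) (some 0)) else none
    | 4, none => some (sink 0)
    | 5, some _ => some (sink 0)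
    | _, _ => none
  | cell i x => some (i.cases (head x 0) fun i => cell i.castSucc x)
  | sink i => some (if i = 0 then cell (Fin.last ℓ) (some 0) else sink 0)

/-- The transition function: `0` resets, `1` ticks and `2` turns. -/
def next (q : State ℓ k) (a : Fin 3) : Option (State ℓ k) :=
  match a with
  | 0 => some (reset q)
  | 1 => tick q
  | 2 => turn q

/-- `q` is the head or a cell of the tape `T`, read from the head, in phase `j`. -/
def OnTape (j : Fin 6) (T : List (Option (Fin 4))) : State ℓ k → Prop
  | ctl _ _ => False
  | head x j' => j' = j ∧ T[0]? = some x
  | cell i x => T[(i : ℕ) + 1]? = some x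
  | sink _ => False

/-- `q` is one of the states of the configuration with carry `b`, phase `j` and tape `T`. -/
def InConfig (b : Bool) (j : Fin 6) (T : List (Option (Fin 4))) (q : State ℓ k) : Prop :=
  q = ctl b j ∨ OnTape j T q

/-- The tape on which the digits `A` precede the end marker and the digits `B` follow it. -/
def tape (A B : List (Fin 4)) : List (Option (Fin 4)) := A.map some ++ none :: B.map some

/-- The number represented by a configuration, with the lower digits in `B`. -/
def value (b : Bool) (A B : List (Fin 4)) : ℕ :=
  Nat.ofDigits 4 (B.map Fin.val) + 4 ^ B.length * (Nat.ofDigits 4 (A.map Fin.val) + b.toNat)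

theorem value_cons (b b' : Bool) (a a' : Fin 4) (A B : List (Fin 4))
    (h : (a : ℕ) + b.toNat = a' + 4 * b'.toNat) :
    value b (a :: A) B = value b' A (B ++ [a']) := by
  simp only [value, List.map_append, List.map_cons, List.map_nil, Nat.ofDigits_append,
    Nat.ofDigits_cons, Nat.ofDigits_nil, List.length_map, List.length_append, List.length_cons,
    List.length_nil, pow_add]
  linear_combination 4 ^ B.length * h

theorem value_nil (b : Bool) (B : List (Fin 4)) :
    value b [] B = value false B [] + 4 ^ B.length * b.toNat := by
  simp [value]

theorem value_false_nil_lt (B : List (Fin 4)) : value false B [] < 4 ^ B.length := by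
  have h : Nat.ofDigits 4 (B.map Fin.val) < 4 ^ (B.map Fin.val).length :=
    Nat.ofDigits_lt_base_pow_length (by norm_num) (by simp)
  simpa [value] using h

theorem exists_turn_of_onTape {j : Fin 6} {x y : Option (Fin 4)} {T : List (Option (Fin 4))}
    (hT : T.length = ℓ + 1) (hx : turn (head x j : State ℓ k) = some (cell (Fin.last ℓ) y))
    {q : State ℓ k} (hq : OnTape j (x :: T) q) :
    ∃ q', turn q = some q' ∧ OnTape 0 (T ++ [y]) q' := by
  match q, hq with
  | head z i, hq =>
    obtain ⟨rfl, hz⟩ := hq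
    obtain rfl : x = z := by simpa using hz
    exact ⟨_, hx, by simp [OnTape, hT]⟩
  | cell i z, hq =>
    refine ⟨_, rfl, ?_⟩
    simp only [OnTape, List.getElem?_cons_succ] at hq
    have hi : (i : ℕ) < T.length := by omega
    rw [← List.getElem?_append_left (l₂ := [y]) hi] at hq
    induction i using Fin.cases with
    | zero => exact ⟨rfl, hq⟩
    | succ i => exact hq

theorem exists_turn_of_inConfig {b b' : Bool} {j : Fin 6} {x y : Option (Fin 4)}
    {T : List (Option (Fin 4))} (hT : T.length = ℓ + 1)
    (hb : turn (ctl b j : State ℓ k) = some (ctl b' 0))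
    (hx : turn (head x j : State ℓ k) = some (cell (Fin.last ℓ) y))
    {q : State ℓ k} (hq : InConfig b j (x :: T) q) :
    ∃ q', turn q = some q' ∧ InConfig b' 0 (T ++ [y]) q' := by
  rcases hq with rfl | hq
  · exact ⟨_, hb, .inl rfl⟩
  · obtain ⟨q', h, h'⟩ := exists_turn_of_onTape hT hx hq
    exact ⟨q', h, .inr h'⟩

theorem exists_turn_eq_of_inConfig {b b' : Bool} {j : Fin 6} {x y : Option (Fin 4)}
    {T : List (Option (Fin 4))} (hT : T.length = ℓ + 1)
    (hb : turn (ctl b j : State ℓ k) = some (ctl b' 0))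
    (hx : turn (head x j : State ℓ k) = some (cell (Fin.last ℓ) y))
    {q' : State ℓ k} (hq' : InConfig b' 0 (T ++ [y]) q') :
    ∃ q, InConfig b j (x :: T) q ∧ turn q = some q' := by
  rcases hq' with rfl | hq'
  · exact ⟨_, .inl rfl, hb⟩
  match q', hq' with
  | head z i, hq' =>
    obtain ⟨rfl, hz⟩ := hq'
    rw [List.getElem?_append_left (by omega)] at hz
    exact ⟨cell 0 z, .inr (by simpa [OnTape] using hz), rfl⟩
  | cell i z, hq' =>
    simp only [OnTape] at hq'
    induction i using Fin.lastCases with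
    | last =>
      obtain rfl : y = z := by simpa [← hT] using hq'
      exact ⟨head x j, .inr (by simp [OnTape]), hx⟩
    | cast i =>
      refine ⟨cell i.succ z, .inr ?_, rfl⟩
      rw [List.getElem?_append_left (by simp; omega)] at hq'
      simpa [OnTape] using hq'

theorem exists_tick_eq_of_inConfig {b : Bool} {j : Fin 6} {T : List (Option (Fin 4))}
    (hj : j ≠ 5) {q' : State ℓ k} (hq' : InConfig b (j + 1) T q') :
    ∃ q, InConfig b j T q ∧ tick q = some q' := by
  rcases hq' with rfl | hq'
  · exact ⟨ctl b j, .inl rfl, by simp [tick, hj]⟩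
  match q', hq' with
  | head z i, hq' =>
    obtain ⟨rfl, hz⟩ := hq'
    exact ⟨head z j, .inr ⟨rfl, hz⟩, by simp [tick, hj]⟩
  | cell i z, hq' => exact ⟨cell i z, .inr hq', rfl⟩

/-- Reading a letter in a configuration of small value leads to a configuration whose value is
larger by at most one. -/
theorem exists_config_next (b : Bool) (j : Fin 6) (A B : List (Fin 4)) (a : Fin 3)
    (hAB : A.length + B.length = ℓ + 1) (hv : value b A B < 4 ^ (ℓ + 1))
    (hdef : ∀ q : State ℓ k, InConfig b j (tape A B) q → next q a ≠ none) :
    ∃ b' j' A' B', A'.length + B'.length = ℓ + 1 ∧ value b' A' B' ≤ value b A B + 1 ∧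
      ∀ q' : State ℓ k, InConfig b' j' (tape A' B') q' →
        ∃ q, InConfig b j (tape A B) q ∧ next q a = some q' := by
  have hctl := hdef (ctl b j) (.inl rfl)
  match a with
  | 0 =>
    refine ⟨false, 0, [], List.replicate (ℓ + 1) 0, by simp, by simp [value], ?_⟩
    rintro q' (rfl | hq')
    · exact ⟨ctl b j, .inl rfl, rfl⟩
    match q', hq' with
    | head z i, hq' =>
      obtain ⟨rfl, hz⟩ := hq'
      obtain rfl : none = z := by simpa [tape] using hz
      obtain ⟨x, hx⟩ : ∃ x, (tape A B)[0]? = some x := by cases A <;> simp [tape]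
      exact ⟨head x j, .inr ⟨rfl, hx⟩, rfl⟩
    | cell i z, hq' =>
      have hi : (i : ℕ) + 1 < (tape A B).length := by simp [tape]; omega
      refine ⟨cell i (tape A B)[(i : ℕ) + 1], .inr (by simp [OnTape, hi]), ?_⟩
      simp only [OnTape, tape, List.map_nil, List.nil_append, List.getElem?_cons_succ,
        List.map_replicate, List.getElem?_replicate, i.isLt, if_true] at hq'
      simpa [next, reset] using hq'
  | 1 =>
    have hj : j ≠ 5 := by
      rintro rfl
      exact hctl rfl
    exact ⟨b, j + 1, A, B, hAB, by omega, fun q' => exists_tick_eq_of_inConfig hj⟩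
  | 2 =>
    match A with
    | [] =>
      have hhead := hdef (head none j) (.inr ⟨rfl, rfl⟩)
      have hlen : (B.map some).length = ℓ + 1 := by simpa using hAB
      have hB : B.length = ℓ + 1 := by simpa using hAB
      suffices h : ∃ b', value b' B [] ≤ value b [] B + 1 ∧
          turn (ctl b j : State ℓ k) = some (ctl b' 0) ∧
          turn (head none j : State ℓ k) = some (cell (Fin.last ℓ) none) by
        obtain ⟨b', hval, h1, h2⟩ := h
        exact ⟨b', 0, B, [], by simpa using hAB, hval,
          fun q' => exists_turn_eq_of_inConfig hlen h1 h2⟩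
      rw [value_nil] at hv ⊢
      cases b <;> fin_cases j <;> first
        | exact absurd rfl hctl
        | exact absurd rfl hhead
        | exact ⟨_, by simp [value], rfl, rfl⟩
        | simp [hB] at hv
    | d :: A =>
      have hhead := hdef (head (some d) j) (.inr ⟨rfl, rfl⟩)
      have hlen : (tape A B).length = ℓ + 1 := by simp [tape] at hAB ⊢; omega
      suffices h : ∃ b' d', (d : ℕ) + b.toNat = (d' : Fin 4) + 4 * b'.toNat ∧
          turn (ctl b j : State ℓ k) = some (ctl b' 0) ∧
          turn (head (some d) j : State ℓ k) = some (cell (Fin.last ℓ) (some d')) by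
        obtain ⟨b', d', hval, h1, h2⟩ := h
        refine ⟨b', 0, A, B ++ [d'], by simp at hAB ⊢; omega,
          by rw [value_cons _ _ _ _ _ _ hval]; omega, fun q' hq' => ?_⟩
        refine exists_turn_eq_of_inConfig hlen h1 h2 ?_
        simpa [tape] using hq'
      clear hdef hv
      cases b <;> fin_cases j <;> fin_cases d <;> first
        | exact absurd rfl hctl
        | exact absurd rfl hhead
        | exact ⟨_, _, rfl, rfl, rfl⟩

theorem not_sync_inConfig (w : List (Fin 3)) (b : Bool) (j : Fin 6) (A B : List (Fin 4))
    (hAB : A.length + B.length = ℓ + 1) (hv : value b A B + w.length < 4 ^ (ℓ + 1))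
    (s : State ℓ k) :
    ¬ ∀ q : State ℓ k, InConfig b j (tape A B) q → pfaRun next q w = some s := by
  induction w generalizing b j A B with
  | nil =>
    intro h
    obtain ⟨x, hx⟩ : ∃ x, (tape A B)[0]? = some x := by cases A <;> simp [tape]
    have h1 := h (ctl b j) (.inl rfl)
    have h2 := h (head x j) (.inr ⟨rfl, hx⟩)
    rw [pfaRun_nil] at h1 h2
    cases h1.trans h2.symm
  | cons a w ih =>
    intro h
    rw [List.length_cons] at hv
    obtain ⟨b', j', A', B', hAB', hv', hstep⟩ := exists_config_next (k := k) b j A B a hAB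
      (by omega) fun q hq hn => by
        have := h q hq
        rw [pfaRun_cons, hn] at this
        cases this
    refine ih b' j' A' B' hAB' (by omega) fun q' hq' => ?_
    obtain ⟨q, hq, hqq'⟩ := hstep q' hq'
    have := h q hq
    rwa [pfaRun_cons, hqq'] at this

theorem le_length_of_isCareSyncWord {w : List (Fin 3)}
    (hw : IsCareSyncWord (next (ℓ := ℓ) (k := k)) w) : 4 ^ (ℓ + 1) ≤ w.length := by
  obtain ⟨s, hs⟩ := hw
  by_contra! h
  refine not_sync_inConfig w false 0 [] (List.replicate (ℓ + 1) 0) (by simp) ?_ s fun q _ => hs q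
  simpa [value] using h

/-- The word that performs action `j`. -/
def actionWord (j : ℕ) : List (Fin 3) := List.replicate j 1 ++ [2]

theorem pfaRun_replicate_ctl (b : Bool) (j : Fin 6) :
    pfaRun next (ctl b 0 : State ℓ k) (List.replicate j 1) = some (ctl b j) := by
  fin_cases j <;> rfl

theorem pfaRun_replicate_head (x : Option (Fin 4)) (j : Fin 6) :
    pfaRun next (head x 0 : State ℓ k) (List.replicate j 1) = some (head x j) := by
  fin_cases j <;> rfl

theorem pfaRun_replicate_cell (i : Fin (ℓ + 1)) (x : Option (Fin 4)) (j : ℕ) :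
    pfaRun next (cell i x : State ℓ k) (List.replicate j 1) = some (cell i x) := by
  induction j with
  | zero => rfl
  | succ j ih => exact ih

theorem pfaRun_replicate_sink (i : Fin (k + 1)) (j : ℕ) :
    pfaRun next (sink i : State ℓ k) (List.replicate j 1) =
      some (sink ⟨min (i + j) k, by omega⟩) := by
  induction j generalizing i with
  | zero =>
    simp only [List.replicate_zero, pfaRun_nil, Option.some.injEq, sink.injEq, Fin.ext_iff]
    omega
  | succ j ih =>
    refine (ih _).trans ?_
    simp only [Option.some.injEq, sink.injEq, Fin.mk.injEq]
    omega

theorem pfaRun_replicate_onTape {j : Fin 6} {T : List (Option (Fin 4))} {q : State ℓ k}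
    (hq : OnTape 0 T q) :
    ∃ q', pfaRun next q (List.replicate j 1) = some q' ∧ OnTape j T q' := by
  match q, hq with
  | head x i, hq =>
    obtain ⟨rfl, hx⟩ := hq
    exact ⟨_, pfaRun_replicate_head x j, rfl, hx⟩
  | cell i x, hq => exact ⟨_, pfaRun_replicate_cell i x j, hq⟩

theorem pfaRun_actionWord {q q' : State ℓ k} {j : ℕ}
    (h : pfaRun next q (List.replicate j 1) = some q') :
    pfaRun next q (actionWord j) = turn q' := by
  rw [actionWord, pfaRun_append, h, Option.bind_some, pfaRun_cons]
  change (turn q').bind some = _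
  simp

/-- All states of a configuration can be synchronized. -/
def Syncable (b : Bool) (T : List (Option (Fin 4))) (ℓ k : ℕ) : Prop :=
  ∃ (w : List (Fin 3)) (s : State ℓ k), ∀ q, InConfig b 0 T q → pfaRun next q w = some s

theorem Syncable.of_turn {b b' : Bool} (j : Fin 6) {x y : Option (Fin 4)}
    {T : List (Option (Fin 4))} (hT : T.length = ℓ + 1)
    (hb : turn (ctl b j : State ℓ k) = some (ctl b' 0))
    (hx : turn (head x j : State ℓ k) = some (cell (Fin.last ℓ) y))
    (h : Syncable b' (T ++ [y]) ℓ k) : Syncable b (x :: T) ℓ k := by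
  obtain ⟨w, s, hw⟩ := h
  refine ⟨actionWord j ++ w, s, fun q hq => ?_⟩
  obtain ⟨p, hp, hp'⟩ : ∃ p, pfaRun next q (List.replicate j 1) = some p ∧
      InConfig b j (x :: T) p := by
    rcases hq with rfl | hq
    · exact ⟨_, pfaRun_replicate_ctl b j, .inl rfl⟩
    · obtain ⟨p, h1, h2⟩ := pfaRun_replicate_onTape (j := j) hq
      exact ⟨p, h1, .inr h2⟩
  obtain ⟨q', hq', hin⟩ := exists_turn_of_inConfig hT hb hx hp'
  rw [pfaRun_append, pfaRun_actionWord hp, hq']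
  exact hw q' hin

theorem turn_onTape_of_head_sink {j : Fin 6} {x : Option (Fin 4)}
    {T : List (Option (Fin 4))} (hx : turn (head x j : State ℓ k) = some (sink 0))
    {q : State ℓ k} (hq : OnTape 0 (x :: T) q) :
    ∃ q', pfaRun next q (actionWord j) = some q' ∧ (q' = sink 0 ∨ OnTape 0 T q') := by
  match q, hq with
  | head z i, hq =>
    obtain ⟨rfl, hz⟩ := hq
    obtain rfl : x = z := by simpa using hz
    exact ⟨_, (pfaRun_actionWord (pfaRun_replicate_head x j)).trans hx, .inl rfl⟩
  | cell i z, hq =>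
    refine ⟨_, pfaRun_actionWord (pfaRun_replicate_cell i z j), .inr ?_⟩
    induction i using Fin.cases with
    | zero => simpa [OnTape] using hq
    | succ i => simpa [OnTape] using hq

/-- After an overflow, the digits on the tape can be erased one after the other. -/
theorem exists_sync_sink (hk : 0 < k) (hk' : k ≤ 5) (D : List (Fin 4)) :
    ∃ w : List (Fin 3), ∀ q : State ℓ k, q = sink 0 ∨ OnTape 0 (D.map some) q →
      pfaRun next q w = some (sink 0) := by
  induction D with
  | nil =>
    refine ⟨[], fun q hq => ?_⟩
    rcases hq with rfl | hq
    · rfl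
    · cases q <;> simp [OnTape] at hq
  | cons d D ih =>
    obtain ⟨w, hw⟩ := ih
    refine ⟨actionWord (5 : Fin 6) ++ w, fun q hq => ?_⟩
    rcases hq with rfl | hq
    · rw [pfaRun_append, pfaRun_actionWord (pfaRun_replicate_sink 0 _)]
      have h : min ((0 : Fin (k + 1)) + ((5 : Fin 6) : ℕ)) k ≠ 0 := by
        simp; omega
      have h' : turn (sink ⟨min ((0 : Fin (k + 1)) + ((5 : Fin 6) : ℕ)) k, by omega⟩ :
          State ℓ k) = some (sink 0) := by
        simp only [turn, Fin.ext_iff, Fin.val_zero]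
        rw [if_neg (by simpa using h)]
      rw [h']
      exact hw _ (.inl rfl)
    · obtain ⟨q', h, h'⟩ := turn_onTape_of_head_sink (j := 5) rfl hq
      rw [pfaRun_append, h]
      exact hw q' h'

theorem syncable_of_overflow (hk : 0 < k) (hk' : k ≤ 5) (B : List (Fin 4)) :
    Syncable true (tape [] B) ℓ k := by
  obtain ⟨w, hw⟩ := exists_sync_sink (ℓ := ℓ) hk hk' B
  refine ⟨actionWord (4 : Fin 6) ++ w, sink 0, fun q hq => ?_⟩
  rcases hq with rfl | hq
  · exact hw _ (.inl rfl)
  · obtain ⟨q', h, h'⟩ := turn_onTape_of_head_sink (j := 4) rfl hq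
    rw [pfaRun_append, h]
    exact hw q' h'

theorem syncable (hk : 0 < k) (hk' : k ≤ 5) (K : ℕ) (b : Bool) (A B : List (Fin 4))
    (hAB : A.length + B.length = ℓ + 1) (hv : 4 ^ (ℓ + 1) ≤ value b A B + K) :
    Syncable b (tape A B) ℓ k := by
  induction K using Nat.strong_induction_on generalizing b A B with
  | _ K ihK =>
    induction A generalizing b B with
    | nil =>
      cases b with
      | true => exact syncable_of_overflow hk hk' B
      | false =>
        have hB : B.length = ℓ + 1 := by simpa using hAB
        have hlt := value_false_nil_lt B
        have hval : value true B [] = value false B [] + 1 := by simp [value]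
        simp only [value_nil, Bool.toNat_false, mul_zero, add_zero] at hv
        rw [hB] at hlt
        exact Syncable.of_turn 2 (by simpa using hB) rfl rfl
          (ihK (K - 1) (by omega) true B [] (by simpa using hB) (by omega))
    | cons d A ihA =>
      have hlen : (tape A B).length = ℓ + 1 := by simp [tape] at hAB ⊢; omega
      suffices h : ∃ j b' d', (d : ℕ) + b.toNat = (d' : Fin 4) + 4 * b'.toNat ∧
          turn (ctl b j : State ℓ k) = some (ctl b' 0) ∧
          turn (head (some d) j : State ℓ k) = some (cell (Fin.last ℓ) (some d')) by
        obtain ⟨j, b', d', hval, h1, h2⟩ := h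
        refine Syncable.of_turn j hlen h1 h2 ?_
        have := ihA b' (B ++ [d']) (by simp at hAB ⊢; omega)
          (by rwa [← value_cons _ _ _ _ _ _ hval])
        simpa [tape] using this
      cases b with
      | false => exact ⟨0, false, d, rfl, rfl, rfl⟩
      | true =>
        fin_cases d
        · exact ⟨1, false, 1, rfl, rfl, rfl⟩
        · exact ⟨1, false, 2, rfl, rfl, rfl⟩
        · exact ⟨1, false, 3, rfl, rfl, rfl⟩
        · exact ⟨3, true, 0, rfl, rfl, rfl⟩

theorem exists_isCareSyncWord (hk : 0 < k) (hk' : k ≤ 5) :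
    ∃ w, IsCareSyncWord (next (ℓ := ℓ) (k := k)) w := by
  obtain ⟨w, s, hw⟩ := syncable (ℓ := ℓ) hk hk' (4 ^ (ℓ + 1)) false []
    (List.replicate (ℓ + 1) 0) (by simp) (by omega)
  refine ⟨0 :: w, s, fun q => ?_⟩
  rw [pfaRun_cons]
  refine hw (reset q) ?_
  match q with
  | ctl _ _ => exact .inl rfl
  | head _ _ => exact .inr ⟨rfl, rfl⟩
  | cell i _ =>
    right
    simp only [reset, OnTape, tape, List.map_nil, List.nil_append, List.getElem?_cons_succ,
      List.map_replicate, List.getElem?_replicate, i.isLt, if_true]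
  | sink _ => exact .inl rfl

theorem reach_head_of_cell (i : Fin (ℓ + 1)) (x : Option (Fin 4)) :
    PFAReach next (cell i x : State ℓ k) (head x 0) := by
  induction i using Fin.induction with
  | zero => exact .single (a := 2) rfl
  | succ i ih => exact .trans (.single (a := 2) rfl) ih

theorem reach_cell_of_last (i : Fin (ℓ + 1)) (x : Option (Fin 4)) :
    PFAReach next (cell (Fin.last ℓ) x : State ℓ k) (cell i x) := by
  induction i using Fin.reverseInduction with
  | last => exact .refl _
  | cast i ih => exact ih.trans (.single (a := 2) rfl)

theorem reach_ctl (q : State ℓ k) : PFAReach next q (ctl false 0) := by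
  have hsink (i : Fin (k + 1)) : PFAReach next (sink i : State ℓ k) (ctl false 0) :=
    .single (a := 0) rfl
  match q with
  | ctl _ _ => exact .single (a := 0) rfl
  | head _ _ =>
    exact .trans (.single (a := 0) rfl) (.trans ⟨actionWord 4, rfl⟩ (hsink 0))
  | cell i _ =>
    exact .trans (.single (a := 0) rfl)
      (.trans (reach_head_of_cell i (some 0)) (.trans ⟨actionWord 5, rfl⟩ (hsink 0)))
  | sink i => exact hsink i

theorem reach_of_ctl (q : State ℓ k) : PFAReach next (ctl false 0) q := by
  have hcarry : PFAReach next (ctl false 0 : State ℓ k) (ctl true 0) := ⟨actionWord 2, rfl⟩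
  have hsink : PFAReach next (ctl false 0 : State ℓ k) (sink 0) :=
    hcarry.trans ⟨actionWord 4, rfl⟩
  have hzero : PFAReach next (ctl false 0 : State ℓ k) (head (some 0) 0) :=
    hsink.trans (.trans (.single (a := 2) rfl) (reach_head_of_cell (Fin.last ℓ) _))
  have hincr (d d' : Fin 4) (h : turn (head (some d) 1 : State ℓ k) =
      some (cell (Fin.last ℓ) (some d'))) :
      PFAReach next (head (some d) 0 : State ℓ k) (head (some d') 0) :=
    .trans ⟨actionWord 1, (pfaRun_actionWord (pfaRun_replicate_head (some d) 1)).trans h⟩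
      (reach_head_of_cell (Fin.last ℓ) _)
  have hone := hzero.trans (hincr 0 1 rfl)
  have htwo := hone.trans (hincr 1 2 rfl)
  have hhead (x : Option (Fin 4)) : PFAReach next (ctl false 0 : State ℓ k) (head x 0) := by
    match x with
    | none => exact hzero.trans (.single (a := 0) rfl)
    | some 0 => exact hzero
    | some 1 => exact hone
    | some 2 => exact htwo
    | some 3 => exact htwo.trans (hincr 2 3 rfl)
  match q with
  | ctl false j => exact ⟨_, pfaRun_replicate_ctl false j⟩
  | ctl true j => exact hcarry.trans ⟨_, pfaRun_replicate_ctl true j⟩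
  | head x j => exact (hhead x).trans ⟨_, pfaRun_replicate_head x j⟩
  | cell i x =>
    exact (hhead x).trans (.trans (.single (a := 2) rfl) (reach_cell_of_last i x))
  | sink i =>
    refine hsink.trans ⟨List.replicate i 1, (pfaRun_replicate_sink 0 i).trans ?_⟩
    simp only [Option.some.injEq, sink.injEq, Fin.ext_iff, Fin.val_zero]
    omega

theorem pfaTransitive_next : PFATransitive (next (ℓ := ℓ) (k := k)) :=
  fun q q' => (reach_ctl q).trans (reach_of_ctl q')

end State

end BaseFourCounter

/-- There is a sequence of transitive carefully synchronizing PFAs with three symbols,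
`n` states and shortest carefully synchronizing word length `Ω(2^{2n/5}/n)`. -/
theorem exists_ternary_transitive_pfa_exp : ∃ c : ℝ, 0 < c ∧ ∃ N : ℕ, ∀ n : ℕ, N ≤ n →
    ∃ δ : Fin n → Fin 3 → Option (Fin n),
      PFATransitive δ ∧ (∃ w : List (Fin 3), IsCareSyncWord δ w) ∧
      ∀ w : List (Fin 3), IsCareSyncWord δ w →
        c * (2 : ℝ) ^ (2 * (n : ℝ) / 5) / (n : ℝ) ≤ (w.length : ℝ) := by
  refine ⟨2 ^ (-20 : ℝ), by positivity, 49, fun n hn => ?_⟩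
  obtain ⟨ℓ, k, hk, hk', hnk⟩ : ∃ ℓ k, 0 < k ∧ k ≤ 5 ∧ n = 5 * ℓ + k + 48 :=
    ⟨(n - 49) / 5, (n - 49) % 5 + 1, by omega, by omega, by omega⟩
  obtain ⟨e⟩ := BaseFourCounter.State.nonempty_equiv_fin hnk
  refine ⟨pfaMap e BaseFourCounter.State.next,
    BaseFourCounter.State.pfaTransitive_next.pfaMap e, ?_, fun w hw => ?_⟩
  · obtain ⟨w, hw⟩ := BaseFourCounter.State.exists_isCareSyncWord (ℓ := ℓ) hk hk'
    exact ⟨w, (isCareSyncWord_pfaMap e w).2 hw⟩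
  · have hlen := BaseFourCounter.State.le_length_of_isCareSyncWord
      ((isCareSyncWord_pfaMap e w).1 hw)
    have hn1 : (1 : ℝ) ≤ n := by exact_mod_cast (by omega : 1 ≤ n)
    have hnle : (n : ℝ) ≤ 5 * ℓ + 53 := by exact_mod_cast (by omega : n ≤ 5 * ℓ + 53)
    calc (2 : ℝ) ^ (-20 : ℝ) * 2 ^ (2 * (n : ℝ) / 5) / n
        ≤ 2 ^ (-20 : ℝ) * 2 ^ (2 * (n : ℝ) / 5) := div_le_self (by positivity) hn1
      _ = 2 ^ (-20 + 2 * (n : ℝ) / 5) := (Real.rpow_add two_pos _ _).symm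
      _ ≤ 2 ^ ((2 * (ℓ + 1) : ℕ) : ℝ) := by
        refine Real.rpow_le_rpow_of_exponent_le one_le_two ?_
        push_cast
        linarith
      _ = ((4 ^ (ℓ + 1) : ℕ) : ℝ) := by
        rw [Real.rpow_natCast, pow_mul]
        norm_num
      _ ≤ w.length := by exact_mod_cast hlen
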